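/- Let A₁, …, A_m be real symmetric n×n matrices. Then 2 Σ_{1≤i<j≤m} ‖[A_i,A_j]‖² ≤ (3/2)(Σ_{i=1}^m ‖A_i‖²)² − Σ_{i=1}^m ‖A_i‖⁴. (This is the Li–Li inequality P′(n,m).) -/

import Mathlib

open Matrix BigOperators

/-- Frobenius norm squared of a real `n × n` matrix: the sum of the squares of all entries. -/
noncomputable def frobSq {n : ℕ} (A : Matrix (Fin n) (Fin n) ℝ) : ℝ :=
  ∑ i, ∑ j, (A i j) ^ 2

/-- The commutator `[A, B] = A * B - B * A`. -/
def mcomm {n : ℕ} (A B : Matrix (Fin n) (Fin n) ℝ) : Matrix (Fin n) (Fin n) ℝ :=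
  A * B - B * A

/-- Frobenius inner product. -/
noncomputable def frobIp {n : ℕ} (A B : Matrix (Fin n) (Fin n) ℝ) : ℝ :=
  ∑ i, ∑ j, A i j * B i j

lemma frobIp_self {n : ℕ} (A : Matrix (Fin n) (Fin n) ℝ) : frobIp A A = frobSq A := by
  simp [frobIp, frobSq, sq]

lemma frobIp_trace {n : ℕ} (A B : Matrix (Fin n) (Fin n) ℝ) :
    frobIp A B = (A * Bᵀ).trace := by
  simp [frobIp, Matrix.trace, Matrix.mul_apply]

lemma frobSq_nonneg {n : ℕ} (A : Matrix (Fin n) (Fin n) ℝ) : 0 ≤ frobSq A :=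
  Finset.sum_nonneg fun _ _ => Finset.sum_nonneg fun _ _ => sq_nonneg _

lemma frobIp_conj {n : ℕ} (U A B : Matrix (Fin n) (Fin n) ℝ) (h : U * Uᵀ = 1) :
    frobIp (Uᵀ * A * U) (Uᵀ * B * U) = frobIp A B := by
  rw [frobIp_trace, frobIp_trace]
  have : Uᵀ * A * U * (Uᵀ * B * U)ᵀ = Uᵀ * (A * Bᵀ * U) := by
    simp only [Matrix.transpose_mul, Matrix.transpose_transpose]
    calc Uᵀ * A * U * (Uᵀ * (Bᵀ * U)) = Uᵀ * A * (U * Uᵀ) * (Bᵀ * U) := by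
          simp only [Matrix.mul_assoc]
      _ = _ := by rw [h]; simp only [Matrix.mul_one, Matrix.mul_assoc]
  rw [this, Matrix.trace_mul_comm, Matrix.mul_assoc, h, Matrix.mul_one]

lemma frobSq_conj {n : ℕ} (U A : Matrix (Fin n) (Fin n) ℝ) (h : U * Uᵀ = 1) :
    frobSq (Uᵀ * A * U) = frobSq A := by
  rw [← frobIp_self, frobIp_conj U A A h, frobIp_self]

lemma mcomm_conj {n : ℕ} (U A B : Matrix (Fin n) (Fin n) ℝ) (h : U * Uᵀ = 1) :
    mcomm (Uᵀ * A * U) (Uᵀ * B * U) = Uᵀ * mcomm A B * U := by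
  have key : ∀ X Y : Matrix (Fin n) (Fin n) ℝ,
      Uᵀ * X * U * (Uᵀ * Y * U) = Uᵀ * (X * Y) * U := by
    intro X Y
    calc Uᵀ * X * U * (Uᵀ * Y * U) = Uᵀ * X * (U * Uᵀ) * Y * U := by
          simp only [Matrix.mul_assoc]
      _ = _ := by rw [h]; simp only [Matrix.mul_one, Matrix.mul_assoc]
  rw [mcomm, mcomm, key, key, Matrix.mul_sub, Matrix.sub_mul]

lemma exists_diag {n : ℕ} (A : Matrix (Fin n) (Fin n) ℝ) (hA : A.IsSymm) :
    ∃ (U : Matrix (Fin n) (Fin n) ℝ) (x : Fin n → ℝ), U * Uᵀ = 1 ∧ Uᵀ * U = 1 ∧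
      Uᵀ * A * U = diagonal x := by
  have hH : A.IsHermitian := by
    rw [Matrix.IsHermitian, Matrix.conjTranspose_eq_transpose_of_trivial]; exact hA
  have h1 : (hH.eigenvectorUnitary : Matrix (Fin n) (Fin n) ℝ) *
      (hH.eigenvectorUnitary : Matrix (Fin n) (Fin n) ℝ)ᵀ = 1 := by
    have := (Matrix.mem_unitaryGroup_iff).1 hH.eigenvectorUnitary.2
    rwa [Matrix.star_eq_conjTranspose, Matrix.conjTranspose_eq_transpose_of_trivial] at this
  have h2 : (hH.eigenvectorUnitary : Matrix (Fin n) (Fin n) ℝ)ᵀ *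
      (hH.eigenvectorUnitary : Matrix (Fin n) (Fin n) ℝ) = 1 := by
    have := (Matrix.mem_unitaryGroup_iff').1 hH.eigenvectorUnitary.2
    rwa [Matrix.star_eq_conjTranspose, Matrix.conjTranspose_eq_transpose_of_trivial] at this
  refine ⟨hH.eigenvectorUnitary, hH.eigenvalues, h1, h2, ?_⟩
  have h3 := hH.spectral_theorem
  rw [Unitary.conjStarAlgAut_apply, Matrix.star_eq_conjTranspose,
    Matrix.conjTranspose_eq_transpose_of_trivial] at h3
  set U := (hH.eigenvectorUnitary : Matrix (Fin n) (Fin n) ℝ)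
  set D := diagonal (RCLike.ofReal ∘ hH.eigenvalues : Fin n → ℝ) with hD
  have hD' : D = diagonal hH.eigenvalues := by
    rw [hD]; congr 1
  rw [← hD']
  calc Uᵀ * A * U = Uᵀ * (U * D * Uᵀ) * U := by rw [← h3]
    _ = (Uᵀ * U) * D * (Uᵀ * U) := by simp only [Matrix.mul_assoc]
    _ = D := by rw [h2]; simp

/-- Full symmetric sums are twice the sum over `i < j`. -/
lemma two_mul_sum_lt {m : ℕ} (f : Fin m → Fin m → ℝ) (hs : ∀ i j, f i j = f j i)
    (h0 : ∀ i, f i i = 0) :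
    2 * ∑ i, ∑ j, (if i < j then f i j else 0) = ∑ i, ∑ j, f i j := by
  have h1 : ∑ i, ∑ j, (if i < j then f i j else 0) = ∑ i, ∑ j, (if j < i then f i j else 0) := by
    rw [Finset.sum_comm]
    refine Finset.sum_congr rfl fun i _ => Finset.sum_congr rfl fun j _ => ?_
    rw [hs]
  rw [two_mul]
  nth_rewrite 2 [h1]
  rw [← Finset.sum_add_distrib]
  refine Finset.sum_congr rfl fun i _ => ?_
  rw [← Finset.sum_add_distrib]
  refine Finset.sum_congr rfl fun j _ => ?_
  rcases lt_trichotomy i j with h | h | h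
  · simp [h, h.not_gt]
  · subst h; simp [h0]
  · simp [h, h.not_gt]

/-- The largest Laplacian eigenvalue of a graph with `e` edges is at most `e + 1`. -/
lemma laplacian_bound {n : ℕ} (x : Fin n → ℝ) (E : Finset (Fin n × Fin n))
    (hE : ∀ e ∈ E, e.1 < e.2) :
    ∑ e ∈ E, (x e.1 - x e.2) ^ 2 ≤ ((E.card : ℝ) + 1) * ∑ i, x i ^ 2 := by
  set N := ∑ e ∈ E, (x e.1 - x e.2) ^ 2 with hN
  have hN0 : 0 ≤ N := Finset.sum_nonneg fun _ _ => sq_nonneg _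
  have hs0 : 0 ≤ ∑ i, x i ^ 2 := Finset.sum_nonneg fun _ _ => sq_nonneg _
  let v : Fin n × Fin n → Fin n → ℝ := fun e k =>
    (if k = e.1 then 1 else 0) - (if k = e.2 then 1 else 0)
  let y : Fin n × Fin n → ℝ := fun e => x e.1 - x e.2
  let w : Fin n → ℝ := fun k => ∑ e ∈ E, y e * v e k
  have hxw : ∑ k, x k * w k = N := by
    simp only [w, Finset.mul_sum]
    rw [Finset.sum_comm, hN]
    refine Finset.sum_congr rfl fun e _ => ?_
    have : ∑ k, x k * v e k = y e := by
      simp [v, y, mul_sub, Finset.sum_sub_distrib]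
    calc ∑ k, x k * (y e * v e k) = y e * ∑ k, x k * v e k := by
          rw [Finset.mul_sum]; exact Finset.sum_congr rfl fun k _ => by ring
      _ = _ := by rw [this]; simp only [y]; ring
  have hvv : ∀ e ∈ E, ∀ f ∈ E, |∑ k, v e k * v f k| ≤ 1 + if e = f then 1 else 0 := by
    intro e he f hf
    have h1 := hE e he
    have h2 := hE f hf
    have : ∑ k, v e k * v f k = (if f.1 = e.1 then 1 else 0) - (if f.1 = e.2 then 1 else 0)
        - (if f.2 = e.1 then 1 else 0) + (if f.2 = e.2 then (1:ℝ) else 0) := by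
      simp [v, mul_sub, Finset.sum_sub_distrib]
      ring
    rw [this]
    obtain ⟨a, b⟩ := e
    obtain ⟨c, d⟩ := f
    simp only [Prod.mk.injEq] at *
    rw [abs_le]
    split_ifs <;> first | (exfalso; omega) | norm_num
  have hww : ∑ k, w k ^ 2 ≤ ((E.card : ℝ) + 1) * N := by
    have e1 : ∑ k, w k ^ 2 = ∑ e ∈ E, ∑ f ∈ E, y e * y f * ∑ k, v e k * v f k := by
      simp only [w, sq, Finset.sum_mul_sum]
      simp only [Finset.mul_sum]
      rw [Finset.sum_comm]
      refine Finset.sum_congr rfl fun e _ => ?_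
      rw [Finset.sum_comm]
      refine Finset.sum_congr rfl fun f _ => Finset.sum_congr rfl fun k _ => by ring
    have e2 : ∑ e ∈ E, ∑ f ∈ E, y e * y f * ∑ k, v e k * v f k ≤
        ∑ e ∈ E, ∑ f ∈ E, |y e| * |y f| * (1 + if e = f then 1 else 0) := by
      refine Finset.sum_le_sum fun e he => Finset.sum_le_sum fun f hf => ?_
      calc _ ≤ |y e * y f * ∑ k, v e k * v f k| := le_abs_self _
        _ = |y e| * |y f| * |∑ k, v e k * v f k| := by rw [abs_mul, abs_mul]
        _ ≤ _ := by
          have := hvv e he f hf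
          gcongr
    have e3 : ∑ e ∈ E, ∑ f ∈ E, |y e| * |y f| * (1 + if e = f then (1:ℝ) else 0) =
        (∑ e ∈ E, |y e|) ^ 2 + N := by
      simp only [mul_add, mul_one, Finset.sum_add_distrib, sq, Finset.sum_mul_sum]
      congr 1
      rw [hN]
      refine Finset.sum_congr rfl fun e he => ?_
      simp [he, y, ← sq]
    have e4 : (∑ e ∈ E, |y e|) ^ 2 ≤ E.card * N := by
      have := sq_sum_le_card_mul_sum_sq (s := E) (f := fun e => |y e|)
      simpa [y, hN] using this
    linarith
  have cs := Finset.sum_mul_sq_le_sq_mul_sq Finset.univ x w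
  rw [hxw] at cs
  have h5 : N ^ 2 ≤ (((E.card : ℝ) + 1) * ∑ i, x i ^ 2) * N := by
    nlinarith [mul_le_mul_of_nonneg_left hww hs0]
  rcases hN0.eq_or_lt with h | h
  · rw [← h]; positivity
  · nlinarith

lemma posPart_bound {n : ℕ} (x : Fin n → ℝ) :
    ∑ i, ∑ j, max ((x i - x j) ^ 2 - ∑ k, x k ^ 2) 0 ≤ 2 * ∑ k, x k ^ 2 := by
  set s := ∑ k, x k ^ 2 with hs
  have hs0 : 0 ≤ s := Finset.sum_nonneg fun _ _ => sq_nonneg _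
  rw [← two_mul_sum_lt (fun i j => max ((x i - x j) ^ 2 - s) 0)
    (by intro i j; congr 2; ring) (by intro i; simp [hs0])]
  refine mul_le_mul_of_nonneg_left ?_ (by norm_num)
  rw [← Finset.sum_product']
  let E : Finset (Fin n × Fin n) :=
    Finset.univ.filter fun e => e.1 < e.2 ∧ s < (x e.1 - x e.2) ^ 2
  have h1 : ∑ e ∈ (Finset.univ ×ˢ Finset.univ : Finset (Fin n × Fin n)),
      (if e.1 < e.2 then max ((x e.1 - x e.2) ^ 2 - s) 0 else 0) =
      ∑ e ∈ E, ((x e.1 - x e.2) ^ 2 - s) := by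
    rw [Finset.sum_filter, Finset.univ_product_univ]
    refine Finset.sum_congr rfl fun e _ => ?_
    by_cases h : e.1 < e.2
    · by_cases h' : s < (x e.1 - x e.2) ^ 2
      · simp only [h, h', and_self, if_true]
        exact max_eq_left (by linarith)
      · simp only [h, h', and_false, if_true, if_false]
        exact max_eq_right (by linarith)
    · simp [h]
  rw [h1, Finset.sum_sub_distrib, Finset.sum_const, nsmul_eq_mul]
  have := laplacian_bound x E (by intro e he; exact (Finset.mem_filter.1 he).2.1)
  linarith

/-- Bessel-type bound on a fixed off-diagonal entry. -/
lemma bessel_entry {n : ℕ} {ι : Type*} [DecidableEq ι] (F : Finset ι)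
    (B : ι → Matrix (Fin n) (Fin n) ℝ)
    (hB : ∀ a ∈ F, (B a).IsSymm) (ho : ∀ a ∈ F, ∀ b ∈ F, a ≠ b → frobIp (B a) (B b) = 0)
    (M : ℝ) (hM0 : 0 ≤ M) (hM : ∀ a ∈ F, frobSq (B a) ≤ M) (i j : Fin n) (hij : i ≠ j) :
    2 * ∑ a ∈ F, (B a i j) ^ 2 ≤ M := by
  set c := ∑ a ∈ F, (B a i j) ^ 2 with hc
  have hc0 : 0 ≤ c := Finset.sum_nonneg fun _ _ => sq_nonneg _
  let V : Fin n → Fin n → ℝ := fun k l => ∑ a ∈ F, B a i j * B a k l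
  have hV1 : V i j = c := by
    simp only [V, hc, sq]
  have hV2 : V j i = c := by
    simp only [V, hc, sq]
    refine Finset.sum_congr rfl fun a ha => ?_
    rw [(hB a ha).apply]
  have hVV : ∑ k, ∑ l, V k l ^ 2 ≤ M * c := by
    have e1 : ∑ k, ∑ l, V k l ^ 2 =
        ∑ a ∈ F, ∑ b ∈ F, B a i j * B b i j * frobIp (B a) (B b) := by
      simp only [V, sq, Finset.sum_mul_sum]
      simp only [frobIp, Finset.mul_sum]
      rw [Finset.sum_congr rfl fun k _ => Finset.sum_comm]
      rw [Finset.sum_comm]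
      refine Finset.sum_congr rfl fun a _ => ?_
      rw [Finset.sum_congr rfl fun k _ => Finset.sum_comm]
      rw [Finset.sum_comm]
      refine Finset.sum_congr rfl fun b _ => Finset.sum_congr rfl fun k _ =>
        Finset.sum_congr rfl fun l _ => by ring
    rw [e1, hc, Finset.mul_sum]
    refine Finset.sum_le_sum fun a ha => ?_
    rw [Finset.sum_eq_single a]
    · rw [frobIp_self]
      nlinarith [hM a ha, mul_le_mul_of_nonneg_left (hM a ha) (sq_nonneg (B a i j))]
    · intro b hb hba
      rw [ho a ha b hb hba.symm, mul_zero]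
    · intro h; exact absurd ha h
  have hlow : V i j ^ 2 + V j i ^ 2 ≤ ∑ k, ∑ l, V k l ^ 2 := by
    have r1 : ∀ k l, V k l ^ 2 ≤ ∑ l, V k l ^ 2 := fun k l =>
      Finset.single_le_sum (f := fun l => V k l ^ 2) (fun _ _ => sq_nonneg _) (Finset.mem_univ l)
    have r2 := Finset.add_le_sum (s := Finset.univ) (f := fun k => ∑ l, V k l ^ 2)
      (fun k _ => Finset.sum_nonneg fun _ _ => sq_nonneg _)
      (Finset.mem_univ i) (Finset.mem_univ j) hij
    have := r1 i j
    have := r1 j i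
    linarith
  rw [hV1, hV2] at hlow
  rcases hc0.eq_or_lt with h | h
  · rw [← h]; simpa using hM0
  · nlinarith

lemma lu_diag {n : ℕ} {ι : Type*} [DecidableEq ι] (F : Finset ι) (x : Fin n → ℝ)
    (B : ι → Matrix (Fin n) (Fin n) ℝ)
    (hB : ∀ a ∈ F, (B a).IsSymm) (ho : ∀ a ∈ F, ∀ b ∈ F, a ≠ b → frobIp (B a) (B b) = 0)
    (M : ℝ) (hM0 : 0 ≤ M) (hM : ∀ a ∈ F, frobSq (B a) ≤ M) :
    ∑ a ∈ F, frobSq (mcomm (diagonal x) (B a)) ≤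
      frobSq (diagonal x) * (∑ a ∈ F, frobSq (B a) + M) := by
  have hd : frobSq (diagonal x) = ∑ k, x k ^ 2 := by
    simp [frobSq, Matrix.diagonal_apply, ite_pow]
  rw [hd]
  set s := ∑ k, x k ^ 2 with hs
  have hs0 : 0 ≤ s := Finset.sum_nonneg fun _ _ => sq_nonneg _
  have h1 : ∑ a ∈ F, frobSq (mcomm (diagonal x) (B a)) - s * ∑ a ∈ F, frobSq (B a) =
      ∑ i, ∑ j, ((x i - x j) ^ 2 - s) * ∑ a ∈ F, (B a i j) ^ 2 := by
    rw [Finset.mul_sum, ← Finset.sum_sub_distrib]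
    simp only [Finset.mul_sum]
    rw [Finset.sum_congr rfl fun k _ => Finset.sum_comm]
    rw [Finset.sum_comm]
    refine Finset.sum_congr rfl fun a _ => ?_
    simp only [frobSq, Finset.mul_sum, ← Finset.sum_sub_distrib]
    refine Finset.sum_congr rfl fun i _ => Finset.sum_congr rfl fun j _ => ?_
    simp only [mcomm, Matrix.sub_apply, Matrix.diagonal_mul, Matrix.mul_diagonal]
    ring
  have h2 : ∑ i, ∑ j, ((x i - x j) ^ 2 - s) * ∑ a ∈ F, (B a i j) ^ 2 ≤
      ∑ i, ∑ j, max ((x i - x j) ^ 2 - s) 0 * (M / 2) := by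
    refine Finset.sum_le_sum fun i _ => Finset.sum_le_sum fun j _ => ?_
    have hc0 : 0 ≤ ∑ a ∈ F, (B a i j) ^ 2 := Finset.sum_nonneg fun _ _ => sq_nonneg _
    by_cases hij : i = j
    · subst hij
      have : max ((x i - x i) ^ 2 - s) 0 = 0 := max_eq_right (by simp [hs0])
      rw [this]
      nlinarith
    · have := bessel_entry F B hB ho M hM0 hM i j hij
      calc _ ≤ max ((x i - x j) ^ 2 - s) 0 * ∑ a ∈ F, (B a i j) ^ 2 :=
            mul_le_mul_of_nonneg_right (le_max_left _ _) hc0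
        _ ≤ _ := mul_le_mul_of_nonneg_left (by linarith) (le_max_right _ _)
  have h3 := posPart_bound x
  simp only [← Finset.sum_mul] at h2
  have h4 := mul_le_mul_of_nonneg_right h3 (by linarith : 0 ≤ M / 2)
  nlinarith

/-- Lu's lemma. -/
lemma lu_lemma {n : ℕ} {ι : Type*} [DecidableEq ι] (F : Finset ι)
    (A : Matrix (Fin n) (Fin n) ℝ) (hA : A.IsSymm)
    (B : ι → Matrix (Fin n) (Fin n) ℝ)
    (hB : ∀ a ∈ F, (B a).IsSymm) (ho : ∀ a ∈ F, ∀ b ∈ F, a ≠ b → frobIp (B a) (B b) = 0)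
    (M : ℝ) (hM0 : 0 ≤ M) (hM : ∀ a ∈ F, frobSq (B a) ≤ M) :
    ∑ a ∈ F, frobSq (mcomm A (B a)) ≤ frobSq A * (∑ a ∈ F, frobSq (B a) + M) := by
  obtain ⟨U, x, h1, h2, h3⟩ := exists_diag A hA
  have := lu_diag F x (fun a => Uᵀ * B a * U)
    (by
      intro a ha
      have := hB a ha
      simp only [Matrix.IsSymm, Matrix.transpose_mul, Matrix.transpose_transpose,
        Matrix.mul_assoc] at *
      rw [this])
    (by intro a ha b hb hab; rw [frobIp_conj _ _ _ h1]; exact ho a ha b hb hab)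
    M hM0 (by intro a ha; rw [frobSq_conj _ _ h1]; exact hM a ha)
  rw [← h3] at this
  simpa only [mcomm_conj _ _ _ h1, frobSq_conj _ _ h1] using this

lemma rot_sq {m : ℕ} (Q : Matrix (Fin m) (Fin m) ℝ) (h : Q * Qᵀ = 1) (x : Fin m → ℝ) :
    ∑ k, (∑ i, Q i k * x i) ^ 2 = ∑ i, x i ^ 2 := by
  have h1 : ∀ i j, ∑ k, Q i k * Q j k = if i = j then 1 else 0 := by
    intro i j
    have := congrFun (congrFun h i) j
    simpa [Matrix.mul_apply, Matrix.one_apply] using this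
  calc ∑ k, (∑ i, Q i k * x i) ^ 2 = ∑ i, ∑ j, x i * x j * ∑ k, Q i k * Q j k := by
        simp only [sq, Finset.sum_mul_sum]
        simp only [Finset.mul_sum]
        rw [Finset.sum_comm]
        refine Finset.sum_congr rfl fun i _ => ?_
        rw [Finset.sum_comm]
        refine Finset.sum_congr rfl fun j _ => Finset.sum_congr rfl fun k _ => by ring
    _ = _ := by simp [h1, sq]

lemma rot_frobSq {n m : ℕ} (Q : Matrix (Fin m) (Fin m) ℝ) (h : Q * Qᵀ = 1)
    (X : Fin m → Matrix (Fin n) (Fin n) ℝ) :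
    ∑ k, frobSq (∑ i, Q i k • X i) = ∑ i, frobSq (X i) := by
  simp only [frobSq, Matrix.sum_apply, Matrix.smul_apply, smul_eq_mul]
  rw [Finset.sum_comm]
  conv_rhs => rw [Finset.sum_comm]
  refine Finset.sum_congr rfl fun a _ => ?_
  rw [Finset.sum_comm]
  conv_rhs => rw [Finset.sum_comm]
  refine Finset.sum_congr rfl fun b _ => ?_
  exact rot_sq Q h fun i => X i a b

lemma mcomm_swap {n : ℕ} (A B : Matrix (Fin n) (Fin n) ℝ) : mcomm A B = - mcomm B A := by
  simp [mcomm]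

lemma frobSq_mcomm_swap {n : ℕ} (A B : Matrix (Fin n) (Fin n) ℝ) :
    frobSq (mcomm A B) = frobSq (mcomm B A) := by
  rw [mcomm_swap]; simp [frobSq]

lemma mcomm_self {n : ℕ} (A : Matrix (Fin n) (Fin n) ℝ) : frobSq (mcomm A A) = 0 := by
  simp [mcomm, frobSq]

lemma mcomm_sum_left {n m : ℕ} (q : Fin m → ℝ) (X : Fin m → Matrix (Fin n) (Fin n) ℝ)
    (Y : Matrix (Fin n) (Fin n) ℝ) :
    mcomm (∑ i, q i • X i) Y = ∑ i, q i • mcomm (X i) Y := by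
  simp [mcomm, Finset.sum_mul, Finset.mul_sum, smul_sub, Finset.sum_sub_distrib]

lemma rot_comm {n m : ℕ} (Q : Matrix (Fin m) (Fin m) ℝ) (h : Q * Qᵀ = 1)
    (X : Fin m → Matrix (Fin n) (Fin n) ℝ) :
    ∑ k, ∑ l, frobSq (mcomm (∑ i, Q i k • X i) (∑ i, Q i l • X i)) =
      ∑ i, ∑ j, frobSq (mcomm (X i) (X j)) := by
  have step : ∀ Y : Matrix (Fin n) (Fin n) ℝ,
      ∑ k, frobSq (mcomm (∑ i, Q i k • X i) Y) = ∑ i, frobSq (mcomm (X i) Y) := by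
    intro Y
    simp only [mcomm_sum_left]
    exact rot_frobSq Q h _
  rw [Finset.sum_comm]
  simp only [step]
  rw [Finset.sum_comm]
  refine Finset.sum_congr rfl fun i _ => ?_
  simp only [frobSq_mcomm_swap (X i)]
  exact step _

/-- The orthogonal case. -/
lemma li_li_orth {n m : ℕ} (B : Fin m → Matrix (Fin n) (Fin n) ℝ)
    (hB : ∀ i, (B i).IsSymm) (ho : ∀ i j, i ≠ j → frobIp (B i) (B j) = 0) :
    ∑ i, ∑ j, frobSq (mcomm (B i) (B j)) ≤
      (3 / 2) * (∑ i, frobSq (B i)) ^ 2 - ∑ i, (frobSq (B i)) ^ 2 := by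
  rcases Nat.eq_zero_or_pos m with hm | hm
  · subst hm; simp
  have : Nonempty (Fin m) := ⟨⟨0, hm⟩⟩
  set a : Fin m → ℝ := fun i => frobSq (B i) with ha
  have ha0 : ∀ i, 0 ≤ a i := fun i => frobSq_nonneg _
  obtain ⟨p, hp⟩ := Finite.exists_max a
  have hS : ∑ i, a i = a p + ∑ i ∈ Finset.univ.erase p, a i :=
    (Finset.add_sum_erase _ _ (Finset.mem_univ p)).symm
  obtain ⟨y, hy0, hyp, hyr, hy⟩ : ∃ y, 0 ≤ y ∧ y ≤ a p ∧
      y ≤ ∑ i ∈ Finset.univ.erase p, a i ∧ ∀ i ≠ p, a i ≤ y := by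
    rcases (Finset.univ.erase p).eq_empty_or_nonempty with he | hne
    · refine ⟨0, le_rfl, ha0 p, ?_, ?_⟩
      · simp [he]
      · intro i hi
        have : i ∈ Finset.univ.erase p := by simp [hi]
        simp [he] at this
    · obtain ⟨q, hq, hqm⟩ := Finset.exists_max_image _ a hne
      refine ⟨a q, ha0 q, hp q, Finset.single_le_sum (fun i _ => ha0 i) hq, ?_⟩
      intro i hi
      exact hqm i (by simp [hi])
  have hlu : ∀ i M, 0 ≤ M → (∀ j ≠ i, a j ≤ M) →
      ∑ j, frobSq (mcomm (B i) (B j)) ≤ a i * (∑ j, a j - a i + M) := by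
    intro i M hM0 hM
    have h := lu_lemma (Finset.univ.erase i) (B i) (hB i) B (fun j _ => hB j)
      (fun j _ k _ => ho j k) M hM0 (fun j hj => hM j (Finset.ne_of_mem_erase hj))
    have e1 : ∑ j, frobSq (mcomm (B i) (B j)) =
        ∑ j ∈ Finset.univ.erase i, frobSq (mcomm (B i) (B j)) := by
      rw [← Finset.add_sum_erase _ _ (Finset.mem_univ i), mcomm_self, zero_add]
    have e2 : ∑ j, a j - a i = ∑ j ∈ Finset.univ.erase i, a j := by
      rw [← Finset.add_sum_erase _ _ (Finset.mem_univ i)]; ring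
    rw [e1, e2]; exact h
  set S := ∑ i, a i with hSdef
  have h1 := hlu p y hy0 hy
  have h2 : ∑ i ∈ Finset.univ.erase p, ∑ j, frobSq (mcomm (B i) (B j)) ≤
      ∑ i ∈ Finset.univ.erase p, a i * (S - a i + a p) :=
    Finset.sum_le_sum fun i _ => hlu i (a p) (ha0 p) (fun j _ => hp j)
  have h3 : ∑ i ∈ Finset.univ.erase p, a i * (S - a i + a p) =
      (S + a p) * (∑ i ∈ Finset.univ.erase p, a i) - ∑ i ∈ Finset.univ.erase p, a i ^ 2 := by
    rw [Finset.mul_sum, ← Finset.sum_sub_distrib]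
    exact Finset.sum_congr rfl fun i _ => by ring
  rw [← Finset.add_sum_erase _ _ (Finset.mem_univ p),
    ← Finset.add_sum_erase _ (fun i => a i ^ 2) (Finset.mem_univ p)]
  set R := ∑ i ∈ Finset.univ.erase p, a i with hR
  rw [h3] at h2
  rw [hS] at h1 h2 ⊢
  nlinarith [sq_nonneg (a p - y), sq_nonneg (R - y), mul_nonneg hy0 (sub_nonneg.2 hyr)]

/-- The Li–Li inequality P′(n,m): for real symmetric `n × n` matrices `A₁, …, A_m`,
`2 Σ_{i<j} ‖[A_i,A_j]‖² ≤ (3/2)(Σ_i ‖A_i‖²)² − Σ_i ‖A_i‖⁴`. -/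
theorem li_li_inequality (n m : ℕ) (A : Fin m → Matrix (Fin n) (Fin n) ℝ)
    (hA : ∀ i, (A i).IsSymm) :
    2 * ∑ i, ∑ j, (if i < j then frobSq (mcomm (A i) (A j)) else 0) ≤
      (3 / 2) * (∑ i, frobSq (A i)) ^ 2 - ∑ i, (frobSq (A i)) ^ 2 := by
  rw [two_mul_sum_lt (fun i j => frobSq (mcomm (A i) (A j)))
    (fun i j => frobSq_mcomm_swap _ _) (fun i => mcomm_self _)]
  obtain ⟨G, hGd⟩ : ∃ G : Matrix (Fin m) (Fin m) ℝ, ∀ i j, G i j = frobIp (A i) (A j) :=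
    ⟨Matrix.of fun i j => frobIp (A i) (A j), fun _ _ => rfl⟩
  have hG : G.IsSymm := by
    ext i j
    rw [Matrix.transpose_apply, hGd, hGd, frobIp, frobIp]
    exact Finset.sum_congr rfl fun _ _ => Finset.sum_congr rfl fun _ _ => mul_comm _ _
  obtain ⟨Q, d, h1, h2, h3⟩ := exists_diag G hG
  let B : Fin m → Matrix (Fin n) (Fin n) ℝ := fun k => ∑ i, Q i k • A i
  have hB : ∀ k, (B k).IsSymm := by
    intro k
    simp only [B, Matrix.IsSymm, Matrix.transpose_sum, Matrix.transpose_smul]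
    exact Finset.sum_congr rfl fun i _ => by rw [(hA i).eq]
  have hip : ∀ k l, frobIp (B k) (B l) = diagonal d k l := by
    intro k l
    rw [← h3]
    simp only [Matrix.mul_apply, Matrix.transpose_apply, Finset.sum_mul, hGd, frobIp, B,
      Matrix.sum_apply, Matrix.smul_apply, smul_eq_mul, Finset.mul_sum]
    rw [Finset.sum_congr rfl fun a _ => Finset.sum_comm]
    rw [Finset.sum_comm]
    refine Finset.sum_congr rfl fun j _ => ?_
    rw [Finset.sum_congr rfl fun a _ => Finset.sum_comm]
    rw [Finset.sum_comm]
    refine Finset.sum_congr rfl fun i _ => Finset.sum_congr rfl fun a _ =>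
      Finset.sum_congr rfl fun b _ => by ring
  have key := li_li_orth B hB (by
    intro i j hij; rw [hip, Matrix.diagonal_apply_ne _ hij])
  have k1 : ∑ i, frobSq (B i) = ∑ i, frobSq (A i) := rot_frobSq Q h1 A
  have k2 := rot_comm Q h1 A
  have k3 : ∑ i, frobSq (A i) ^ 2 ≤ ∑ i, frobSq (B i) ^ 2 := by
    have e1 : ∑ i, frobSq (B i) ^ 2 = frobSq (diagonal d) := by
      have : ∀ i, frobSq (B i) = d i := fun i => by
        rw [← frobIp_self, hip, Matrix.diagonal_apply_eq]
      simp only [this]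
      simp [frobSq, Matrix.diagonal_apply, ite_pow]
    rw [e1, ← h3, frobSq_conj _ _ h1]
    refine Finset.sum_le_sum fun i _ => ?_
    have := Finset.single_le_sum (f := fun j => G i j ^ 2) (s := Finset.univ)
      (fun _ _ => sq_nonneg _) (Finset.mem_univ i)
    simpa only [hGd, frobIp_self] using this
  rw [k1] at key
  change ∑ k, ∑ l, frobSq (mcomm (B k) (B l)) = _ at k2
  rw [k2] at key
  linarith
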